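/- Let C > 0, r₀ > 0, κ₁ > 0, κ₂ > 0, set κ = (1+κ₁)(1+κ₂) and γ = max{ 2^(−κ₁/(4κ)), 2^(−κ₂/(2κ)) }. Suppose D̃ : ℝ → [0,∞) is nondecreasing on (−∞, r₀] and satisfies D̃(s − δ) ≤ C·(δ^(−4κ)·D̃(s)^(1+κ₁) + δ^(−2κ)·D̃(s)^(1+κ₂)) for all s ≤ r₀ and all δ ∈ (0, r₀]. Define δ(t) = max{ (4C·D̃(t)^(κ₁))^(1/(4κ)), (4C·D̃(t)^(κ₂))^(1/(2κ)) } and assume δ(r₀) ≤ r₀. Then D̃(s) = 0 for all s ≤ r₀ − δ(r₀)/(1−γ). -/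

import Mathlib

open Real

/-! The step `δ(t)` is chosen so that each of the two terms of the recursive inequality is at most
`D t / 4`, hence `D (t - δ(t)) ≤ D t / 2`. Being a maximum of positive powers of `D t`, the step
itself then contracts, `δ(t - δ(t)) ≤ γ δ(t)`, so iterating `t ↦ t - δ(t)` moves `t` by at most
`∑ γⁿ δ(r₀) = δ(r₀) / (1 - γ)` in total while `δ` decreases to zero. -/

section Iteration

variable {𝕜 : Type*} [Field 𝕜] [LinearOrder 𝕜] [IsStrictOrderedRing 𝕜] {f : 𝕜 → 𝕜} {s₀ ε : 𝕜}

theorem map_le_pow_mul_of_map_sub_self_le_mul (hmono : MonotoneOn f (Set.Iic s₀))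
    (hf : ∀ t ≤ s₀, 0 ≤ f t) (hε₀ : 0 ≤ ε) (hε₁ : ε < 1)
    (hstep : ∀ t ≤ s₀, f (t - f t) ≤ ε * f t) {s t : 𝕜} (ht : t ≤ s₀)
    (hst : s ≤ t - f t / (1 - ε)) (n : ℕ) : f s ≤ ε ^ n * f t := by
  have hε : 0 < 1 - ε := sub_pos.2 hε₁
  induction n generalizing t with
  | zero =>
    have hs : s ≤ t := hst.trans (sub_le_self t (div_nonneg (hf t ht) hε.le))
    simpa using hmono (hs.trans ht) ht hs
  | succ n ih =>
    have hut : t - f t ≤ s₀ := (sub_le_self t (hf t ht)).trans ht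
    -- The endpoint `t - f t / (1 - ε)` does not move to the left when `t` becomes `t - f t`.
    have hsu : s ≤ (t - f t) - f (t - f t) / (1 - ε) :=
      calc s ≤ t - f t / (1 - ε) := hst
        _ = (t - f t) - ε * f t / (1 - ε) := by field_simp; ring
        _ ≤ (t - f t) - f (t - f t) / (1 - ε) := by gcongr; exact hstep t ht
    calc f s ≤ ε ^ n * f (t - f t) := ih hut hsu
      _ ≤ ε ^ n * (ε * f t) := by gcongr; exact hstep t ht
      _ = ε ^ (n + 1) * f t := by ring

theorem eq_zero_of_map_sub_self_le_mul [Archimedean 𝕜] (hmono : MonotoneOn f (Set.Iic s₀))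
    (hf : ∀ t ≤ s₀, 0 ≤ f t) (hε₀ : 0 ≤ ε) (hε₁ : ε < 1)
    (hstep : ∀ t ≤ s₀, f (t - f t) ≤ ε * f t) {s : 𝕜} (hs : s ≤ s₀ - f s₀ / (1 - ε)) :
    f s = 0 := by
  have hss₀ : s ≤ s₀ := hs.trans (sub_le_self s₀ (div_nonneg (hf s₀ le_rfl) (sub_pos.2 hε₁).le))
  by_contra hne
  have hs_pos : 0 < f s := (hf s hss₀).lt_of_ne' hne
  have hs₀_pos : 0 < f s₀ := hs_pos.trans_le (hmono hss₀ Set.self_mem_Iic hss₀)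
  obtain ⟨n, hn⟩ := exists_pow_lt_of_lt_one (div_pos hs_pos hs₀_pos) hε₁
  exact ((lt_div_iff₀ hs₀_pos).1 hn).not_ge
    (map_le_pow_mul_of_map_sub_self_le_mul hmono hf hε₀ hε₁ hstep le_rfl hs n)

end Iteration

/-- For `x > 0`, the smallest step `δ > 0` with `A * (δ ^ (-p) * x ^ (1 + k)) ≤ x`. -/
noncomputable def criticalStep (A k p x : ℝ) : ℝ := (A * x ^ k) ^ (1 / p)

section CriticalStep

variable {A k p x δ c : ℝ}

theorem criticalStep_nonneg (hA : 0 ≤ A) (hx : 0 ≤ x) : 0 ≤ criticalStep A k p x := by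
  unfold criticalStep; positivity

theorem criticalStep_pos (hA : 0 < A) (hx : 0 < x) : 0 < criticalStep A k p x := by
  unfold criticalStep; positivity

theorem monotoneOn_criticalStep (hA : 0 ≤ A) (hk : 0 ≤ k) (hp : 0 ≤ p) :
    MonotoneOn (criticalStep A k p) (Set.Ici 0) := by
  intro x (hx : 0 ≤ x) y _ hxy
  unfold criticalStep
  gcongr

theorem criticalStep_const_mul (hA : 0 ≤ A) (hc : 0 ≤ c) (hx : 0 ≤ x) :
    criticalStep A k p (c * x) = c ^ (k / p) * criticalStep A k p x := by
  calc (A * (c * x) ^ k) ^ (1 / p) = (c ^ k * (A * x ^ k)) ^ (1 / p) := by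
        rw [mul_rpow hc hx, mul_left_comm]
    _ = c ^ (k / p) * (A * x ^ k) ^ (1 / p) := by
        rw [mul_rpow (by positivity) (by positivity), ← rpow_mul hc, mul_one_div]

theorem mul_rpow_neg_mul_rpow_le_of_criticalStep_le (hA : 0 ≤ A) (hp : 0 < p) (hx : 0 < x)
    (hδ : 0 < δ) (h : criticalStep A k p x ≤ δ) : A * (δ ^ (-p) * x ^ (1 + k)) ≤ x := by
  have hpow : A * x ^ k ≤ δ ^ p := by
    rwa [criticalStep, one_div, rpow_inv_le_iff_of_pos (by positivity) hδ.le hp] at h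
  calc A * (δ ^ (-p) * x ^ (1 + k)) = x * (A * x ^ k / δ ^ p) := by
        rw [rpow_neg hδ.le, rpow_add hx, rpow_one]; ring
    _ ≤ x := mul_le_of_le_one_right hx.le ((div_le_one (rpow_pos_of_pos hδ p)).2 hpow)

end CriticalStep

/-- The step `δ` of the iteration, as a function of the value `x = D t` of the energy. With the
constant `4 * C`, each of the two terms of the recursive inequality is at most `x / 4`. -/
noncomputable def stampacchiaStep (C k₁ k₂ p₁ p₂ x : ℝ) : ℝ :=
  max (criticalStep (4 * C) k₁ p₁ x) (criticalStep (4 * C) k₂ p₂ x)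

/-- The factor `γ` by which `stampacchiaStep` shrinks when the energy is halved. -/
noncomputable def stampacchiaRatio (k₁ k₂ p₁ p₂ : ℝ) : ℝ :=
  max (2 ^ (-(k₁ / p₁))) (2 ^ (-(k₂ / p₂)))

section StampacchiaStep

variable {C k₁ k₂ p₁ p₂ x : ℝ}

theorem stampacchiaRatio_nonneg : 0 ≤ stampacchiaRatio k₁ k₂ p₁ p₂ :=
  le_max_of_le_left (by positivity)

theorem stampacchiaRatio_lt_one (hk₁ : 0 < k₁) (hk₂ : 0 < k₂) (hp₁ : 0 < p₁) (hp₂ : 0 < p₂) :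
    stampacchiaRatio k₁ k₂ p₁ p₂ < 1 :=
  max_lt (rpow_lt_one_of_one_lt_of_neg one_lt_two (neg_neg_of_pos (div_pos hk₁ hp₁)))
    (rpow_lt_one_of_one_lt_of_neg one_lt_two (neg_neg_of_pos (div_pos hk₂ hp₂)))

theorem stampacchiaStep_nonneg (hC : 0 ≤ C) (hx : 0 ≤ x) : 0 ≤ stampacchiaStep C k₁ k₂ p₁ p₂ x :=
  le_max_of_le_left (criticalStep_nonneg (by positivity) hx)

theorem stampacchiaStep_pos (hC : 0 < C) (hx : 0 < x) : 0 < stampacchiaStep C k₁ k₂ p₁ p₂ x :=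
  lt_max_of_lt_left (criticalStep_pos (by positivity) hx)

theorem monotoneOn_stampacchiaStep (hC : 0 ≤ C) (hk₁ : 0 ≤ k₁) (hk₂ : 0 ≤ k₂) (hp₁ : 0 ≤ p₁)
    (hp₂ : 0 ≤ p₂) : MonotoneOn (stampacchiaStep C k₁ k₂ p₁ p₂) (Set.Ici 0) :=
  (monotoneOn_criticalStep (by positivity) hk₁ hp₁).max
    (monotoneOn_criticalStep (by positivity) hk₂ hp₂)

theorem stampacchiaStep_half_le (hC : 0 ≤ C) (hx : 0 ≤ x) :
    stampacchiaStep C k₁ k₂ p₁ p₂ (x / 2) ≤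
      stampacchiaRatio k₁ k₂ p₁ p₂ * stampacchiaStep C k₁ k₂ p₁ p₂ x := by
  have criticalStep_half (k p : ℝ) :
      criticalStep (4 * C) k p (x / 2) = 2 ^ (-(k / p)) * criticalStep (4 * C) k p x := by
    rw [div_eq_inv_mul, criticalStep_const_mul (by positivity) (by positivity) hx,
      rpow_neg_eq_inv_rpow]
  rw [stampacchiaStep, criticalStep_half, criticalStep_half]
  exact max_le
    (mul_le_mul (le_max_left _ _) (le_max_left _ _) (criticalStep_nonneg (by positivity) hx)
      stampacchiaRatio_nonneg)
    (mul_le_mul (le_max_right _ _) (le_max_right _ _) (criticalStep_nonneg (by positivity) hx)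
      stampacchiaRatio_nonneg)

theorem mul_stampacchiaStep_rpow_add_le_half (hC : 0 < C) (hp₁ : 0 < p₁) (hp₂ : 0 < p₂)
    (hx : 0 < x) :
    C * (stampacchiaStep C k₁ k₂ p₁ p₂ x ^ (-p₁) * x ^ (1 + k₁)
      + stampacchiaStep C k₁ k₂ p₁ p₂ x ^ (-p₂) * x ^ (1 + k₂)) ≤ x / 2 := by
  set δ := stampacchiaStep C k₁ k₂ p₁ p₂ x
  have hδ : 0 < δ := stampacchiaStep_pos hC hx
  have h₁ : 4 * C * (δ ^ (-p₁) * x ^ (1 + k₁)) ≤ x :=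
    mul_rpow_neg_mul_rpow_le_of_criticalStep_le (by positivity) hp₁ hx hδ (le_max_left _ _)
  have h₂ : 4 * C * (δ ^ (-p₂) * x ^ (1 + k₂)) ≤ x :=
    mul_rpow_neg_mul_rpow_le_of_criticalStep_le (by positivity) hp₂ hx hδ (le_max_right _ _)
  linarith

end StampacchiaStep

theorem stampacchia_finite_speed_general {C s₀ k₁ k₂ p₁ p₂ : ℝ} (hC : 0 < C) (hk₁ : 0 < k₁)
    (hk₂ : 0 < k₂) (hp₁ : 0 < p₁) (hp₂ : 0 < p₂) {D : ℝ → ℝ} (hD : ∀ t ≤ s₀, 0 ≤ D t)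
    (hmono : MonotoneOn D (Set.Iic s₀))
    (hrec : ∀ s ≤ s₀, ∀ δ ∈ Set.Ioc 0 (stampacchiaStep C k₁ k₂ p₁ p₂ (D s₀)),
      D (s - δ) ≤ C * (δ ^ (-p₁) * D s ^ (1 + k₁) + δ ^ (-p₂) * D s ^ (1 + k₂)))
    {s : ℝ} (hs : s ≤ s₀ - stampacchiaStep C k₁ k₂ p₁ p₂ (D s₀) /
      (1 - stampacchiaRatio k₁ k₂ p₁ p₂)) :
    D s = 0 := by
  set δ : ℝ → ℝ := fun t ↦ stampacchiaStep C k₁ k₂ p₁ p₂ (D t)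
  have hstep_mono := monotoneOn_stampacchiaStep hC.le hk₁.le hk₂.le hp₁.le hp₂.le
  have hδ_nonneg (t : ℝ) (ht : t ≤ s₀) : 0 ≤ δ t := stampacchiaStep_nonneg hC.le (hD t ht)
  have hδ_mono : MonotoneOn δ (Set.Iic s₀) := hstep_mono.comp hmono hD
  have hγ : stampacchiaRatio k₁ k₂ p₁ p₂ < 1 := stampacchiaRatio_lt_one hk₁ hk₂ hp₁ hp₂
  have sub_step_le {t : ℝ} (ht : t ≤ s₀) : t - δ t ≤ s₀ :=
    (sub_le_self t (hδ_nonneg t ht)).trans ht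
  have halving (t : ℝ) (ht : t ≤ s₀) : D (t - δ t) ≤ D t / 2 := by
    rcases (hD t ht).eq_or_lt with hzero | hpos
    · simpa [← hzero] using hmono (sub_step_le ht) ht (sub_le_self t (hδ_nonneg t ht))
    · exact (hrec t ht (δ t) ⟨stampacchiaStep_pos hC hpos, hδ_mono ht Set.self_mem_Iic ht⟩).trans
        (mul_stampacchiaStep_rpow_add_le_half hC hp₁ hp₂ hpos)
  have contraction (t : ℝ) (ht : t ≤ s₀) :
      δ (t - δ t) ≤ stampacchiaRatio k₁ k₂ p₁ p₂ * δ t :=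
    (hstep_mono (hD _ (sub_step_le ht)) (div_nonneg (hD t ht) zero_le_two) (halving t ht)).trans
      (stampacchiaStep_half_le hC.le (hD t ht))
  have hδs : δ s = 0 :=
    eq_zero_of_map_sub_self_le_mul hδ_mono hδ_nonneg stampacchiaRatio_nonneg hγ contraction hs
  have hss₀ : s ≤ s₀ :=
    hs.trans (sub_le_self s₀ (div_nonneg (hδ_nonneg s₀ le_rfl) (sub_pos.2 hγ).le))
  exact ((hD s hss₀).eq_of_not_lt fun hpos ↦ (stampacchiaStep_pos hC hpos).ne' hδs).symm

/-- Finite speed of propagation via Stampacchia iteration: with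
`κ = (1+κ₁)(1+κ₂)` and `γ = max (2^(-κ₁/(4κ))) (2^(-κ₂/(2κ)))`, if the localized
energy `D̃` is nonnegative, nondecreasing on `(-∞, r₀]`, satisfies the recursive
inequality `D̃(s-δ) ≤ C (δ^(-4κ) D̃(s)^(1+κ₁) + δ^(-2κ) D̃(s)^(1+κ₂))` for all
`s ≤ r₀` and `δ ∈ (0, r₀]`, and if the step size
`δ(t) = max ((4C D̃(t)^κ₁)^(1/(4κ))) ((4C D̃(t)^κ₂)^(1/(2κ)))` satisfies
`δ(r₀) ≤ r₀`, then `D̃(s) = 0` for all `s ≤ r₀ - δ(r₀)/(1-γ)`. -/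
theorem stampacchia_finite_speed (C r₀ κ₁ κ₂ : ℝ) (hC : 0 < C) (hr₀ : 0 < r₀)
    (hκ₁ : 0 < κ₁) (hκ₂ : 0 < κ₂) (κ γ : ℝ) (hκ : κ = (1 + κ₁) * (1 + κ₂))
    (hγ : γ = max ((2 : ℝ) ^ (-(κ₁ / (4 * κ)))) ((2 : ℝ) ^ (-(κ₂ / (2 * κ)))))
    (D : ℝ → ℝ) (hD : ∀ t, 0 ≤ D t)
    (hmono : ∀ s t : ℝ, s ≤ t → t ≤ r₀ → D s ≤ D t)
    (hrec : ∀ s : ℝ, s ≤ r₀ → ∀ δ ∈ Set.Ioc (0 : ℝ) r₀,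
      D (s - δ) ≤ C * (δ ^ (-(4 * κ)) * (D s) ^ (1 + κ₁)
        + δ ^ (-(2 * κ)) * (D s) ^ (1 + κ₂)))
    (δf : ℝ → ℝ)
    (hδf : ∀ t, δf t = max ((4 * C * (D t) ^ κ₁) ^ (1 / (4 * κ)))
      ((4 * C * (D t) ^ κ₂) ^ (1 / (2 * κ))))
    (hle : δf r₀ ≤ r₀) :
    ∀ s ≤ r₀ - δf r₀ / (1 - γ), D s = 0 := by
  have hκ_pos : 0 < κ := hκ ▸ by positivity
  obtain rfl : δf = fun t ↦ stampacchiaStep C κ₁ κ₂ (4 * κ) (2 * κ) (D t) := funext hδf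
  subst hγ
  exact fun s hs ↦ stampacchia_finite_speed_general hC hκ₁ hκ₂ (by positivity) (by positivity)
    (fun t _ ↦ hD t) (fun a _ b hb hab ↦ hmono a b hab hb)
    (fun t ht δ hδ ↦ hrec t ht δ ⟨hδ.1, hδ.2.trans hle⟩) hs
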